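/- Fix μ>0 and R>0. Let φ be a real-analytic function satisfying □̃_μφ = 0 on an open set containing the closed ball {X∈ℝ⁴ : N(X) ≤ R²}. Then for every Y∈ℝ⁴ with N(Y) < R², φ(Y) = (√(1+μ²R²)/(2π²)) · ∫_{S³_R} (d̃eg φ)(X) · K_μ(X,Y) dS(X)/R. -/

import Mathlib

noncomputable section

open MeasureTheory

/-- Euclidean 4-space. -/
abbrev E4 := EuclideanSpace ℝ (Fin 4)

/-- `N(X) = (x⁰)² + (x¹)² + (x²)² + (x³)²` for `X ∈ ℝ⁴`. -/
def Nq (X : E4) : ℝ := ∑ i, X i ^ 2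

/-- The partial derivative `∂f/∂xⁱ` of a `ℂ`-valued function on `ℝ⁴`. -/
def pd (i : Fin 4) (f : E4 → ℂ) (X : E4) : ℂ := fderiv ℝ f X (EuclideanSpace.single i 1)

/-- The Laplacian `□f = Σᵢ ∂²f/∂(xⁱ)²`. -/
def lap (f : E4 → ℂ) (X : E4) : ℂ := ∑ i, pd i (pd i f) X

/-- The degree operator `deg f = Σᵢ xⁱ ∂f/∂xⁱ`. -/
def degOp (f : E4 → ℂ) (X : E4) : ℂ := ∑ i, (X i : ℂ) * pd i f X

/-- `d̃eg f = f + deg f`. -/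
def tdeg (f : E4 → ℂ) (X : E4) : ℂ := f X + degOp f X

/-- The conformal Laplacian `□̃_μ f = □f + μ²(deg(deg f) + 3·deg f + 2f)`. -/
def boxTilde (μ : ℝ) (f : E4 → ℂ) (X : E4) : ℂ :=
  lap f X + (μ ^ 2 : ℝ) * (degOp (degOp f) X + 3 * degOp f X + 2 * f X)

/-- The indefinite inner product `⟨W,W′⟩₍₁,₄₎` on `ℝ⁵`. -/
def form14 (W W' : Fin 5 → ℝ) : ℝ :=
  W 0 * W' 0 - W 1 * W' 1 - W 2 * W' 2 - W 3 * W' 3 - W 4 * W' 4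

/-- `X̂ = (√(μ⁻² + N(X)), x⁰, x¹, x², x³) ∈ ℝ⁵`. -/
def hat (μ : ℝ) (X : E4) : Fin 5 → ℝ :=
  Fin.cons (Real.sqrt ((μ ^ 2)⁻¹ + Nq X)) (fun i => X i)

/-- The Poisson kernel `K_μ(X,Y) = −1/⟨X̂−Ŷ, X̂−Ŷ⟩₍₁,₄₎`. -/
def Kmu (μ : ℝ) (X Y : E4) : ℝ :=
  -(form14 (hat μ X - hat μ Y) (hat μ X - hat μ Y))⁻¹

/-- Integral of `g` over the sphere `S³_R ⊂ ℝ⁴` of radius `R` centered at the origin with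
respect to the (non-normalized) Euclidean surface measure `dS`, of total mass `2π²R³`:
it is `R³` times the integral over the unit sphere with its Euclidean surface measure. -/
def sphereInt (R : ℝ) (g : E4 → ℂ) : ℂ :=
  (R ^ 3 : ℝ) • ∫ ω : Metric.sphere (0 : E4) 1,
    g (R • (ω : E4)) ∂(volume : Measure E4).toSphere



lemma pd_analytic {f : E4 → ℂ} {V : Set E4} (hf : AnalyticOnNhd ℝ f V) (i : Fin 4) :
    AnalyticOnNhd ℝ (pd i f) V := by
  intro x hx
  exact ((ContinuousLinearMap.apply ℝ ℂ (EuclideanSpace.single i (1:ℝ) : E4)).analyticAt _).comp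
    (hf x hx).fderiv

lemma coord_analytic (i : Fin 4) (x : E4) : AnalyticAt ℝ (fun X : E4 => (X i : ℂ)) x :=
  (Complex.ofRealCLM.comp (EuclideanSpace.proj (𝕜 := ℝ) i : E4 →L[ℝ] ℝ)).analyticAt x

lemma degOp_analytic {f : E4 → ℂ} {V : Set E4} (hf : AnalyticOnNhd ℝ f V) :
    AnalyticOnNhd ℝ (degOp f) V := by
  intro x hx
  unfold degOp
  exact Finset.analyticAt_fun_sum _ fun i _ => (coord_analytic i x).mul (pd_analytic hf i x hx)

lemma tdeg_analytic {f : E4 → ℂ} {V : Set E4} (hf : AnalyticOnNhd ℝ f V) :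
    AnalyticOnNhd ℝ (tdeg f) V := by
  intro x hx
  exact (hf x hx).add (degOp_analytic hf x hx)

lemma lap_analytic {f : E4 → ℂ} {V : Set E4} (hf : AnalyticOnNhd ℝ f V) :
    AnalyticOnNhd ℝ (lap f) V := by
  intro x hx
  unfold lap
  exact Finset.analyticAt_fun_sum _ fun i _ => (pd_analytic (pd_analytic hf i) i x hx)

lemma pd_mul {f g : E4 → ℂ} {x : E4} (hf : DifferentiableAt ℝ f x) (hg : DifferentiableAt ℝ g x)
    (i : Fin 4) : pd i (fun y => f y * g y) x = f x * pd i g x + pd i f x * g x := by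
  unfold pd
  rw [(hf.hasFDerivAt.fun_mul hg.hasFDerivAt).fderiv]
  simp [mul_comm]

lemma pd_add {f g : E4 → ℂ} {x : E4} (hf : DifferentiableAt ℝ f x) (hg : DifferentiableAt ℝ g x)
    (i : Fin 4) : pd i (fun y => f y + g y) x = pd i f x + pd i g x := by
  unfold pd
  rw [(hf.hasFDerivAt.fun_add hg.hasFDerivAt).fderiv]
  simp

lemma pd_sub {f g : E4 → ℂ} {x : E4} (hf : DifferentiableAt ℝ f x) (hg : DifferentiableAt ℝ g x)
    (i : Fin 4) : pd i (fun y => f y - g y) x = pd i f x - pd i g x := by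
  unfold pd
  rw [(hf.hasFDerivAt.fun_sub hg.hasFDerivAt).fderiv]
  simp

lemma pd_sum {f : Fin 4 → E4 → ℂ} {x : E4} (hf : ∀ j, DifferentiableAt ℝ (f j) x)
    (i : Fin 4) : pd i (fun y => ∑ j, f j y) x = ∑ j, pd i (f j) x := by
  unfold pd
  rw [(HasFDerivAt.fun_sum fun j _ => (hf j).hasFDerivAt).fderiv]
  simp

lemma pd_const (c : ℂ) (i : Fin 4) (x : E4) : pd i (fun _ => c) x = 0 := by
  simp [pd]

lemma pd_coord (i j : Fin 4) (x : E4) :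
    pd i (fun X : E4 => (X j : ℂ)) x = if j = i then 1 else 0 := by
  unfold pd
  rw [show (fun X : E4 => (X j : ℂ)) =
    (Complex.ofRealCLM.comp (EuclideanSpace.proj (𝕜 := ℝ) j : E4 →L[ℝ] ℝ)) from rfl,
    ContinuousLinearMap.fderiv]
  by_cases h : j = i <;> simp [h]

lemma pd_congr {f g : E4 → ℂ} {x : E4} (h : f =ᶠ[nhds x] g) (i : Fin 4) : pd i f x = pd i g x := by
  unfold pd; rw [h.fderiv_eq]

lemma fderiv_eq_sum (f : E4 → ℂ) (x v : E4) :
    fderiv ℝ f x v = ∑ i, (v i : ℂ) * pd i f x := by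
  have hv : v = ∑ i, v i • (EuclideanSpace.single i (1:ℝ) : E4) := by
    ext j
    simp [Finset.sum_apply, Pi.single_apply]
  conv_lhs => rw [hv]
  rw [map_sum]
  simp [pd]

lemma degOp_eq (f : E4 → ℂ) (x : E4) : degOp f x = fderiv ℝ f x x := (fderiv_eq_sum f x x).symm

lemma pd_inv {f : E4 → ℂ} {x : E4} (hf : DifferentiableAt ℝ f x) (h0 : f x ≠ 0)
    (i : Fin 4) : pd i (fun y => (f y)⁻¹) x = - pd i f x * (f x)⁻¹ ^ 2 := by
  unfold pd
  have := (hasDerivAt_inv h0).comp_hasFDerivAt_of_eq x hf.hasFDerivAt rfl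
  have h2 : HasFDerivAt (fun y => (f y)⁻¹) _ x := this
  rw [h2.fderiv]
  simp
  ring

/-- continuity of a product with a compactly supported function -/
lemma cont_mul_tsupport {χ h : E4 → ℂ} {V : Set E4} (hV : IsOpen V) (hχ : Continuous χ)
    (hs : tsupport χ ⊆ V) (hh : ContinuousOn h V) : Continuous (fun x => χ x * h x) := by
  rw [continuous_iff_continuousAt]
  intro x
  by_cases hx : x ∈ tsupport χ
  · exact hχ.continuousAt.mul (hh.continuousAt (hV.mem_nhds (hs hx)))
  · have : (fun x => χ x * h x) =ᶠ[nhds x] fun _ => 0 := by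
      filter_upwards [(isClosed_tsupport χ).isOpen_compl.mem_nhds hx] with y hy
      rw [image_eq_zero_of_notMem_tsupport hy, zero_mul]
    exact this.continuousAt

lemma pd_tsupport (χ : E4 → ℂ) (i : Fin 4) : tsupport (pd i χ) ⊆ tsupport χ := 
  (tsupport_fderiv_apply_subset ℝ (f := χ) _)

lemma pd_cont {χ : E4 → ℂ} (hχ : ContDiff ℝ 1 χ) (i : Fin 4) : Continuous (pd i χ) :=
  (hχ.continuous_fderiv (by norm_num)).clm_apply continuous_const

lemma int_mul_tsupport {χ h : E4 → ℂ} {V : Set E4} (hV : IsOpen V) (hχ : Continuous χ)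
    (hc : HasCompactSupport χ)
    (hs : tsupport χ ⊆ V) (hh : ContinuousOn h V) : Integrable (fun x => χ x * h x) := 
  (cont_mul_tsupport hV hχ hs hh).integrable_of_hasCompactSupport hc.mul_right

lemma parts {χ h : E4 → ℂ} {V : Set E4} (hV : IsOpen V) (hχ : ContDiff ℝ 1 χ)
    (hc : HasCompactSupport χ)
    (hs : tsupport χ ⊆ V) (hh : AnalyticOnNhd ℝ h V) (i : Fin 4) :
    ∫ x, χ x * pd i h x = - ∫ x, pd i χ x * h x := by
  refine integral_mul_fderiv_eq_neg_fderiv_mul_of_integrable ?_ ?_ ?_ ?_ ?_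
  · exact int_mul_tsupport hV (pd_cont hχ i) (hc.of_isClosed_subset (isClosed_tsupport _) (pd_tsupport χ i)) 
      ((pd_tsupport χ i).trans hs) hh.continuousOn
  · exact int_mul_tsupport hV hχ.continuous hc hs (pd_analytic hh i).continuousOn
  · exact int_mul_tsupport hV hχ.continuous hc hs hh.continuousOn
  · intro x _; exact hχ.differentiable (by norm_num) x
  · intro x hx; exact (hh x (hs hx)).differentiableAt

/-- weak Green identity -/
lemma green {χ g G : E4 → ℂ} {V : Set E4} (hV : IsOpen V) (hχ : ContDiff ℝ 1 χ)
    (hc : HasCompactSupport χ)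
    (hs : tsupport χ ⊆ V) (hg : AnalyticOnNhd ℝ g V) (hG : AnalyticOnNhd ℝ G V)
    (hl : ∀ x ∈ V, lap g x = 0) :
    ∫ x, ∑ i, pd i χ x * (g x * pd i G x - G x * pd i g x) = - ∫ x, χ x * (g x * lap G x) := by
  have hF : ∀ i, AnalyticOnNhd ℝ (fun x => g x * pd i G x - G x * pd i g x) V := fun i =>
    (hg.mul (pd_analytic hG i)).sub (hG.mul (pd_analytic hg i))
  rw [integral_finsetSum]
  · have : ∀ i, ∫ x, pd i χ x * (g x * pd i G x - G x * pd i g x) =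
      - ∫ x, χ x * pd i (fun x => g x * pd i G x - G x * pd i g x) x := fun i => by
        rw [parts hV hχ hc hs (hF i) i, neg_neg]
    simp_rw [this]
    rw [Finset.sum_neg_distrib, ← integral_finsetSum]
    · congr 1
      apply integral_congr_ae
      filter_upwards with x
      by_cases hx : x ∈ tsupport χ
      · have hxV := hs hx
        rw [← Finset.mul_sum]
        congr 1
        have e : ∀ i, pd i (fun x => g x * pd i G x - G x * pd i g x) x =
            g x * pd i (pd i G) x - G x * pd i (pd i g) x := fun i => by
          have a1 := (hg x hxV).differentiableAt
          have a2 := (hG x hxV).differentiableAt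
          have a3 := (pd_analytic hg i x hxV).differentiableAt
          have a4 := (pd_analytic hG i x hxV).differentiableAt
          rw [pd_sub (a1.fun_mul a4) (a2.fun_mul a3), pd_mul a1 a4, pd_mul a2 a3]
          ring
        simp_rw [e]
        rw [Finset.sum_sub_distrib, ← Finset.mul_sum, ← Finset.mul_sum]
        have := hl x hxV
        unfold lap at this ⊢
        rw [this]; ring
      · simp [image_eq_zero_of_notMem_tsupport hx]
    · intro i _
      exact int_mul_tsupport hV hχ.continuous hc hs (pd_analytic (hF i) i).continuousOn
  · intro i _
    exact int_mul_tsupport hV (pd_cont hχ i) (hc.of_isClosed_subset (isClosed_tsupport _) (pd_tsupport χ i)) 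
      ((pd_tsupport χ i).trans hs) (hF i).continuousOn


/-- The quadratic denominators. -/
def qD (a b : ℝ) (η x : E4) : ℂ :=
  (∑ i, ((a : ℂ) * ((x i : ℂ) * (x i : ℂ)) - (2 * (η i : ℂ)) * (x i : ℂ))) + (b : ℂ)

lemma qD_analytic (a b : ℝ) (η x : E4) : AnalyticAt ℝ (qD a b η) x := by
  unfold qD
  refine AnalyticAt.fun_add (Finset.analyticAt_fun_sum _ fun i _ => ?_) analyticAt_const
  exact (analyticAt_const.fun_mul ((coord_analytic i x).fun_mul (coord_analytic i x))).fun_sub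
    (analyticAt_const.fun_mul (coord_analytic i x))

lemma qD_eq (a b : ℝ) (η x : E4) :
    qD a b η x = ((a * Nq x - 2 * (∑ i, η i * x i) + b : ℝ) : ℂ) := by
  unfold qD Nq
  push_cast
  rw [Finset.sum_sub_distrib, Finset.mul_sum, Finset.mul_sum]
  congr 2
  · refine Finset.sum_congr rfl fun i _ => by ring
  · refine Finset.sum_congr rfl fun i _ => by ring

lemma Nq_eq (x : E4) : Nq x = ‖x‖ ^ 2 := by
  rw [EuclideanSpace.real_norm_sq_eq]; rfl

lemma pd_qD (a b : ℝ) (η x : E4) (i : Fin 4) :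
    pd i (qD a b η) x = 2 * (a : ℂ) * x i - 2 * η i := by
  have c1 : ∀ j, DifferentiableAt ℝ (fun X : E4 => (X j : ℂ)) x := fun j =>
    (coord_analytic j x).differentiableAt
  have c2 := fun j => (c1 j).fun_mul (c1 j)
  have c3 := fun j => (differentiableAt_const (a : ℂ)).fun_mul (c2 j)
  have c4 := fun j => (differentiableAt_const (2 * (η j : ℂ))).fun_mul (c1 j)
  have c5 := fun j => (c3 j).fun_sub (c4 j)
  unfold qD
  rw [pd_add (DifferentiableAt.fun_sum fun j _ => c5 j) (differentiableAt_const _), pd_sum c5,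
    pd_const, add_zero]
  have : ∀ j, pd i (fun x : E4 => (a : ℂ) * ((x j : ℂ) * (x j : ℂ)) - (2 * (η j : ℂ)) * (x j : ℂ)) x
      = (2 * (a : ℂ) * x j - 2 * η j) * (if j = i then 1 else 0) := fun j => by
    rw [pd_sub (c3 j) (c4 j), pd_mul (differentiableAt_const _) (c2 j), pd_const,
      pd_mul (c1 j) (c1 j), pd_mul (differentiableAt_const _) (c1 j), pd_const, pd_coord]
    ring
  simp_rw [this]
  simp

lemma pd_qDinv (a b : ℝ) (η x : E4) (h : qD a b η x ≠ 0) (i : Fin 4) :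
    pd i (fun y => (qD a b η y)⁻¹) x = -(2 * (a : ℂ) * x i - 2 * η i) * ((qD a b η x)⁻¹) ^ 2 := by
  rw [pd_inv (qD_analytic a b η x).differentiableAt h, pd_qD]

lemma qDinv_analytic (a b : ℝ) (η x : E4) (h : qD a b η x ≠ 0) :
    AnalyticAt ℝ (fun y => (qD a b η y)⁻¹) x := (qD_analytic a b η x).fun_inv h

lemma lap_qDinv (a b : ℝ) (η x : E4) (h : qD a b η x ≠ 0) :
    lap (fun y => (qD a b η y)⁻¹) x = 8 * ((Nq η - a * b : ℝ) : ℂ) * ((qD a b η x)⁻¹) ^ 3 := by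
  have ev : ∀ i, pd i (fun y => (qD a b η y)⁻¹) =ᶠ[nhds x]
      fun y => (2 * (η i : ℂ) - 2 * (a : ℂ) * y i) * ((qD a b η y)⁻¹ * (qD a b η y)⁻¹) := fun i => by
    filter_upwards [(qD_analytic a b η x).continuousAt.eventually_ne h] with y hy
    rw [pd_qDinv a b η y hy]; ring
  have d0 := (qDinv_analytic a b η x h).differentiableAt
  have d1 : ∀ j, DifferentiableAt ℝ (fun X : E4 => (X j : ℂ)) x := fun j =>
    (coord_analytic j x).differentiableAt
  have e : ∀ i, pd i (pd i (fun y => (qD a b η y)⁻¹)) x =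
      -2 * (a : ℂ) * ((qD a b η x)⁻¹) ^ 2 +
      2 * (2 * (a : ℂ) * x i - 2 * η i) ^ 2 * ((qD a b η x)⁻¹) ^ 3 := fun i => by
    have k1 := (differentiableAt_const (x := x) (𝕜 := ℝ) (2 * (a : ℂ))).fun_mul (d1 i)
    have k2 := (differentiableAt_const (x := x) (𝕜 := ℝ) (2 * (η i : ℂ)))
    rw [pd_congr (ev i), pd_mul (k2.fun_sub k1) (d0.fun_mul d0), pd_mul d0 d0, pd_sub k2 k1,
      pd_mul (differentiableAt_const _) (d1 i), pd_const, pd_const, pd_coord, pd_qDinv a b η x h]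
    simp
    ring
  unfold lap
  simp_rw [e]
  have hD := qD_eq a b η x
  set D := qD a b η x with hDdef
  have hm : D * D⁻¹ = 1 := mul_inv_cancel₀ h
  set I := D⁻¹
  have : ((Nq η - a * b : ℝ) : ℂ) = (∑ i, ((a : ℂ) * x i - η i) ^ 2) - a * D := by
    rw [hD]
    unfold Nq
    push_cast
    simp only [Fin.sum_univ_four]
    ring
  rw [this]
  simp only [Fin.sum_univ_four]
  linear_combination (8 * (a : ℂ) * I ^ 2 ) * hm

open Filter Topology in
lemma peak_int : ∫ x : E4, (2 / Real.pi ^ 2) * ((1 + ‖x‖ ^ 2)⁻¹) ^ 3 = 1 := by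
  have h := integral_fun_norm_addHaar (volume : Measure E4)
    (fun r : ℝ => (2 / Real.pi ^ 2) * ((1 + r ^ 2)⁻¹) ^ 3)
  beta_reduce at h
  rw [h]
  have hv : (volume : Measure E4).real (Metric.ball 0 1) = Real.pi ^ 2 / 2 := by
    rw [measureReal_def, EuclideanSpace.volume_ball]
    have : Real.Gamma (4 / 2 + 1) = 2 := by
      rw [show (4 / 2 + 1 : ℝ) = ((2 : ℕ) : ℝ) + 1 by norm_num, Real.Gamma_nat_eq_factorial]
      norm_num
    simp [this]
    rw [ENNReal.toReal_ofReal (by positivity), show √Real.pi ^ 4 = (√Real.pi ^ 2) ^ 2 by ring,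
      Real.sq_sqrt Real.pi_pos.le]
  have hi : ∫ y in Set.Ioi (0 : ℝ), y ^ (Module.finrank ℝ E4 - 1) •
      ((2 / Real.pi ^ 2) * ((1 + y ^ 2)⁻¹) ^ 3) = 1 / (2 * Real.pi ^ 2) := by
    have := integral_Ioi_of_hasDerivAt_of_nonneg' (a := 0) (l := 1 / (2 * Real.pi ^ 2))
      (g := fun r : ℝ => 1 / (2 * Real.pi ^ 2) * (1 - (1 + r ^ 2)⁻¹) ^ 2)
      (g' := fun y => y ^ (Module.finrank ℝ E4 - 1) •
      ((2 / Real.pi ^ 2) * ((1 + y ^ 2)⁻¹) ^ 3)) ?_ ?_ ?_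
    · rw [this]; simp
    · intro r _
      have hr : (1 + r ^ 2) ≠ 0 := by positivity
      have h1 : HasDerivAt (fun r : ℝ => 1 + r ^ 2) (2 * r) r := by
        simpa using (hasDerivAt_pow 2 r).const_add 1
      have h2 := (((h1.inv hr).const_sub 1).pow 2).const_mul (1 / (2 * Real.pi ^ 2))
      refine h2.congr_deriv ?_
      simp
      field_simp
      ring
    · intro r hr
      have : (0 : ℝ) < r := hr
      simp only [smul_eq_mul]
      positivity
    · have : Tendsto (fun r : ℝ => 1 + r ^ 2) atTop atTop :=
        tendsto_atTop_add_const_left _ _ (tendsto_pow_atTop (by norm_num))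
      have h3 := (((tendsto_const_nhds (x := (1 : ℝ))).sub this.inv_tendsto_atTop).pow 2).const_mul
        (1 / (2 * Real.pi ^ 2))
      rw [sub_zero, one_pow, mul_one] at h3
      exact h3
  rw [hi, hv]
  simp
  field_simp
  norm_num

open Filter Topology in
lemma peak_lim : Tendsto (fun x : E4 => ‖x‖ ^ Module.finrank ℝ E4 *
    ((2 / Real.pi ^ 2) * ((1 + ‖x‖ ^ 2)⁻¹) ^ 3)) (Bornology.cobounded E4) (𝓝 0) := by
  have h1 : Tendsto (fun r : ℝ => 2 / Real.pi ^ 2 * (r ^ 2)⁻¹) atTop (𝓝 0) := by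
    simpa using (tendsto_pow_atTop (α := ℝ) (n := 2) (by norm_num)).inv_tendsto_atTop.const_mul
      (2 / Real.pi ^ 2)
  have h2 := h1.comp (tendsto_norm_cobounded_atTop (E := E4))
  refine squeeze_zero' (Eventually.of_forall fun x => by positivity) ?_ h2
  filter_upwards [(tendsto_norm_cobounded_atTop (E := E4)).eventually_gt_atTop 0] with x hx
  simp only [Function.comp, finrank_euclideanSpace, Fintype.card_fin]
  rw [mul_left_comm]
  gcongr
  rw [← one_div, ← one_div, div_pow, one_pow, mul_one_div, div_le_div_iff₀ (by positivity) (by positivity)]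
  nlinarith [pow_pos hx 2, pow_pos hx 4]


open Filter Topology

lemma qD_one (η x : E4) (e : ℝ) : qD 1 (Nq η + e) η x = ((‖η - x‖ ^ 2 + e : ℝ) : ℂ) := by
  rw [qD_eq, ← Nq_eq]
  unfold Nq
  congr 1
  simp only [Fin.sum_univ_four, PiLp.sub_apply]
  ring

lemma tend_ker {P : E4 → ℂ} (hP : Continuous P) (hc : HasCompactSupport P) {η : E4}
    (hη : η ∉ tsupport P) (k : ℕ) :
    Tendsto (fun c : ℝ => ∫ x, P x * ((qD 1 (Nq η + (c ^ 2)⁻¹) η x)⁻¹) ^ k) atTop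
      (𝓝 (∫ x, P x * ((qD 1 (Nq η + 0) η x)⁻¹) ^ k)) := by
  have hV : IsOpen ({η}ᶜ : Set E4) := isOpen_compl_singleton
  have hs : tsupport P ⊆ ({η}ᶜ : Set E4) := fun x hx h => hη (h ▸ hx)
  have pos : ∀ x ∈ ({η}ᶜ : Set E4), 0 < ‖η - x‖ ^ 2 := fun x hx => by
    have : η - x ≠ 0 := sub_ne_zero.2 (Ne.symm hx)
    positivity
  have ne : ∀ e : ℝ, 0 ≤ e → ∀ x ∈ ({η}ᶜ : Set E4), qD 1 (Nq η + e) η x ≠ 0 := fun e he x hx => by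
    rw [qD_one]
    have := pos x hx
    exact_mod_cast (by positivity)
  have cont : ∀ e : ℝ, 0 ≤ e → ContinuousOn (fun x => ((qD 1 (Nq η + e) η x)⁻¹) ^ k) {η}ᶜ :=
    fun e he x hx => (((qDinv_analytic 1 (Nq η + e) η x (ne e he x hx)).continuousAt).pow k).continuousWithinAt
  refine tendsto_integral_filter_of_dominated_convergence
    (fun x => ‖P x * ((qD 1 (Nq η + 0) η x)⁻¹) ^ k‖) ?_ ?_ ?_ ?_
  · filter_upwards with c
    exact (cont_mul_tsupport hV hP hs (cont _ (by positivity))).aestronglyMeasurable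
  · filter_upwards with c
    filter_upwards with x
    by_cases hx : x ∈ ({η}ᶜ : Set E4)
    · have := pos x hx
      rw [norm_mul, norm_mul, norm_pow, norm_pow, norm_inv, norm_inv, qD_one, qD_one,
        Complex.norm_real, Complex.norm_real, Real.norm_of_nonneg (by positivity),
        Real.norm_of_nonneg (by positivity)]
      have : 0 ≤ (c ^ 2)⁻¹ := by positivity
      gcongr
    · have : P x = 0 := image_eq_zero_of_notMem_tsupport (fun h => hx (hs h))
      simp [this]
  · exact (int_mul_tsupport hV hP hc hs (cont 0 le_rfl)).norm
  · filter_upwards with x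
    by_cases hx : x ∈ ({η}ᶜ : Set E4)
    · refine Tendsto.const_mul _ (Tendsto.pow (Tendsto.inv₀ ?_ (ne 0 le_rfl x hx)) k)
      simp_rw [qD_one]
      refine (Complex.continuous_ofReal.tendsto _).comp ?_
      exact ((tendsto_pow_atTop (α := ℝ) (n := 2) (by norm_num)).inv_tendsto_atTop).const_add _
    · have : P x = 0 := image_eq_zero_of_notMem_tsupport (fun h => hx (hs h))
      simp [this]

lemma weak_rep {χ g K' : E4 → ℂ} {V : Set E4} (hV : IsOpen V) (hχ : ContDiff ℝ 1 χ)
    (hc : HasCompactSupport χ)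
    (hs : tsupport χ ⊆ V) (hg : AnalyticOnNhd ℝ g V) (hK : AnalyticOnNhd ℝ K' V)
    (hl : ∀ x ∈ V, lap g x = 0) (hl' : ∀ x ∈ V, lap K' x = 0) {η : E4} (hηV : η ∈ V)
    (hη : ∀ i, η ∉ tsupport (pd i χ)) :
    ∫ x, ∑ i, pd i χ x * (g x * (-(2 * (x i : ℂ) - 2 * η i) * ((qD 1 (Nq η + 0) η x)⁻¹) ^ 2 + pd i K' x)
      - ((qD 1 (Nq η + 0) η x)⁻¹ + K' x) * pd i g x) = 4 * (Real.pi : ℂ) ^ 2 * (χ η * g η) := by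
  have ccont : ∀ i, Continuous (fun x : E4 => (x i : ℂ)) := fun i => by fun_prop
  set K : ℝ → E4 → ℂ := fun e x => (qD 1 (Nq η + e) η x)⁻¹ with hKdef
  -- the integrand for general e
  set I : ℝ → ℂ := fun e => ∫ x, ∑ i, pd i χ x * (g x * (-(2 * (x i : ℂ) - 2 * η i) * (K e x) ^ 2 + pd i K' x)
      - (K e x + K' x) * pd i g x) with hI
  have hsi : ∀ i, tsupport (pd i χ) ⊆ V := fun i => (pd_tsupport χ i).trans hs
  have hci : ∀ i, HasCompactSupport (pd i χ) := fun i =>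
    hc.of_isClosed_subset (isClosed_tsupport _) (pd_tsupport χ i)
  have L1 : Tendsto (fun c : ℝ => I (c ^ 2)⁻¹) atTop (𝓝 (I 0)) := by
    have hV2 : IsOpen (V ∩ {η}ᶜ) := hV.inter isOpen_compl_singleton
    have hs2 : ∀ i, tsupport (pd i χ) ⊆ V ∩ {η}ᶜ := fun i x hx =>
      ⟨hsi i hx, fun h => hη i (h ▸ hx)⟩
    have Kc : ∀ e : ℝ, 0 ≤ e → ContinuousOn (K e) (V ∩ {η}ᶜ) := fun e he x hx => by
      refine (qDinv_analytic 1 (Nq η + e) η x ?_).continuousAt.continuousWithinAt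
      rw [qD_one]
      have : η - x ≠ 0 := sub_ne_zero.2 (Ne.symm hx.2)
      exact_mod_cast (by positivity)
    have split : ∀ e : ℝ, 0 ≤ e → I e = ∑ i,
        ((∫ x, (pd i χ x * (g x * (-(2 * (x i : ℂ) - 2 * η i)))) * (K e x) ^ 2) -
        (∫ x, (pd i χ x * pd i g x) * (K e x) ^ 1) + ∫ x, pd i χ x * (g x * pd i K' x - K' x * pd i g x)) := by
      intro e he
      rw [hI]
      have A1 : ∀ i, Integrable (fun x => (pd i χ x * (g x * (-(2 * (x i : ℂ) - 2 * η i)))) * (K e x) ^ 2) := by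
        intro i
        simp_rw [mul_assoc]
        refine int_mul_tsupport hV2 (pd_cont hχ i) (hci i) (hs2 i) ?_
        exact (hg.continuousOn.mono Set.inter_subset_left).mul (ContinuousOn.mul
          (by fun_prop) ((Kc e he).pow 2))
      have A2 : ∀ i, Integrable (fun x => (pd i χ x * pd i g x) * (K e x) ^ 1) := by
        intro i
        simp_rw [mul_assoc]
        refine int_mul_tsupport hV2 (pd_cont hχ i) (hci i) (hs2 i) ?_
        exact ((pd_analytic hg i).continuousOn.mono Set.inter_subset_left).mul ((Kc e he).pow 1)
      have A3 : ∀ i, Integrable (fun x => pd i χ x * (g x * pd i K' x - K' x * pd i g x)) := by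
        intro i
        refine int_mul_tsupport hV (pd_cont hχ i) (hci i) (hsi i) ?_
        exact (hg.continuousOn.mul (pd_analytic hK i).continuousOn).sub
          (hK.continuousOn.mul (pd_analytic hg i).continuousOn)
      have E : ∀ i x, pd i χ x * (g x * (-(2 * (x i : ℂ) - 2 * η i) * (K e x) ^ 2 + pd i K' x)
          - (K e x + K' x) * pd i g x) = (pd i χ x * (g x * (-(2 * (x i : ℂ) - 2 * η i)))) * (K e x) ^ 2
          - (pd i χ x * pd i g x) * (K e x) ^ 1 + pd i χ x * (g x * pd i K' x - K' x * pd i g x) :=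
        fun i x => by ring
      simp_rw [E]
      rw [integral_finsetSum]
      · refine Finset.sum_congr rfl fun i _ => ?_
        refine (integral_add ((A1 i).sub (A2 i)) (A3 i)).trans ?_
        congr 1
        exact integral_sub (A1 i) (A2 i)
      · intro i _
        exact ((A1 i).sub (A2 i)).add (A3 i)
    simp_rw [fun c : ℝ => split (c ^ 2)⁻¹ (by positivity), split 0 le_rfl]
    have key : ∀ (i : Fin 4) (h : E4 → ℂ), ContinuousOn h V → ∀ k : ℕ,
        Tendsto (fun c : ℝ => ∫ x, (pd i χ x * h x) * (K (c ^ 2)⁻¹ x) ^ k) atTop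
          (𝓝 (∫ x, (pd i χ x * h x) * (K 0 x) ^ k)) := fun i h hh k =>
      tend_ker (cont_mul_tsupport hV (pd_cont hχ i) (hsi i) hh) ((hci i).mul_right)
        (fun hx => hη i (tsupport_mul_subset_left hx)) k
    refine tendsto_finsetSum _ fun i _ => ?_
    refine ((key i _ ?_ 2).sub (key i _ ?_ 1)).add_const _
    · exact hg.continuousOn.mul (by fun_prop)
    · exact (pd_analytic hg i).continuousOn
  have hχg : Integrable (fun x => χ x * g x) := int_mul_tsupport hV hχ.continuous hc hs hg.continuousOn
  have L2 := tendsto_integral_comp_smul_smul_of_integrable'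
    (φ := fun x : E4 => (2 / Real.pi ^ 2) * ((1 + ‖x‖ ^ 2)⁻¹) ^ 3) (fun x => by positivity)
    peak_int peak_lim hχg (x₀ := η)
    (hχ.continuous.continuousAt.mul (hg η hηV).continuousAt)
  have L3 : ∀ᶠ c : ℝ in atTop, I (c ^ 2)⁻¹ = 4 * (Real.pi : ℂ) ^ 2 * ∫ x : E4, (c ^ (Module.finrank ℝ E4) *
      ((2 / Real.pi ^ 2) * ((1 + ‖c • (η - x)‖ ^ 2)⁻¹) ^ 3)) • (χ x * g x) := by
    filter_upwards [eventually_gt_atTop 0] with c hcpos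
    have ne : ∀ x, qD 1 (Nq η + (c ^ 2)⁻¹) η x ≠ 0 := fun x => by
      rw [qD_one]
      exact_mod_cast (by positivity)
    have hKa : AnalyticOnNhd ℝ (K (c ^ 2)⁻¹) V := fun x _ => qDinv_analytic _ _ _ _ (ne x)
    have G := green hV hχ hc hs hg (hKa.add hK) hl
    have hpd : ∀ x ∈ V, ∀ i, pd i (K (c ^ 2)⁻¹ + K') x =
        -(2 * (x i : ℂ) - 2 * η i) * (K (c ^ 2)⁻¹ x) ^ 2 + pd i K' x := fun x hx i => by
      have := pd_add (hKa x hx).differentiableAt (hK x hx).differentiableAt i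
      have h2 := pd_qDinv 1 (Nq η + (c ^ 2)⁻¹) η x (ne x) i
      change pd i (fun y => K (c ^ 2)⁻¹ y + K' y) x = _
      rw [this]
      simp only [hKdef]
      rw [h2]
      simp
    have hlap : ∀ x ∈ V, lap (K (c ^ 2)⁻¹ + K') x = -8 * ((c ^ 2)⁻¹ : ℝ) * (K (c ^ 2)⁻¹ x) ^ 3 := by
      intro x hx
      have h2 := lap_qDinv 1 (Nq η + (c ^ 2)⁻¹) η x (ne x)
      have : lap (K (c ^ 2)⁻¹ + K') x = lap (K (c ^ 2)⁻¹) x + lap K' x := by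
        unfold lap
        rw [← Finset.sum_add_distrib]
        refine Finset.sum_congr rfl fun i _ => ?_
        rw [← pd_add (pd_analytic hKa i x hx).differentiableAt (pd_analytic hK i x hx).differentiableAt]
        refine pd_congr ?_ i
        filter_upwards [hV.mem_nhds hx] with y hy
        exact pd_add (hKa y hy).differentiableAt (hK y hy).differentiableAt i
      rw [this, hl' x hx, add_zero]
      simp only [hKdef]
      rw [h2]
      push_cast
      ring
    calc I (c ^ 2)⁻¹ = ∫ x, ∑ i, pd i χ x * (g x * pd i (K (c ^ 2)⁻¹ + K') x - (K (c ^ 2)⁻¹ + K') x * pd i g x) := by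
          rw [hI]
          refine integral_congr_ae (Eventually.of_forall fun x => ?_)
          refine Finset.sum_congr rfl fun i _ => ?_
          by_cases hx : x ∈ tsupport (pd i χ)
          · rw [hpd x (hsi i hx) i]; rfl
          · simp [image_eq_zero_of_notMem_tsupport hx]
      _ = _ := by
        rw [G, ← integral_neg, ← integral_const_mul]
        refine integral_congr_ae (Eventually.of_forall fun x => ?_)
        by_cases hx : x ∈ tsupport χ
        · simp only
          rw [hlap x (hs hx)]
          simp only [hKdef]
          rw [qD_one, norm_smul, finrank_euclideanSpace, Fintype.card_fin, Complex.real_smul]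
          have h1 : (2 / Real.pi ^ 2 : ℝ) * (4 * Real.pi ^ 2) = 8 := by
            field_simp; norm_num
          have h2 : (8 * (c ^ 2)⁻¹ * ((‖η - x‖ ^ 2 + (c ^ 2)⁻¹)⁻¹) ^ 3 : ℝ) =
              4 * Real.pi ^ 2 * (c ^ 4 * (2 / Real.pi ^ 2 * ((1 + (‖c‖ * ‖η - x‖) ^ 2)⁻¹) ^ 3)) := by
            rw [Real.norm_of_nonneg hcpos.le]
            have e1 : (‖η - x‖ ^ 2 + (c ^ 2)⁻¹)⁻¹ = c ^ 2 * (1 + (c * ‖η - x‖) ^ 2)⁻¹ := by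
              have : ‖η - x‖ ^ 2 + (c ^ 2)⁻¹ = (1 + (c * ‖η - x‖) ^ 2) / c ^ 2 := by
                field_simp; ring
              rw [this, inv_div]; ring
            rw [e1]
            field_simp
            norm_num
          have h3 := congrArg (fun r : ℝ => (r : ℂ)) h2
          push_cast at h3 ⊢
          linear_combination (χ x * g x) * h3
        · simp [image_eq_zero_of_notMem_tsupport hx]
  have L4 := (L2.const_mul (4 * (Real.pi : ℂ) ^ 2)).congr' (L3.mono fun c hc => hc.symm)
  exact tendsto_nhds_unique L1 L4


lemma polar {f : E4 → ℂ} (hf : Integrable f) :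
    ∫ x, f x = ∫ r in Set.Ioi (0 : ℝ), (r ^ 3 : ℝ) •
      ∫ ω : Metric.sphere (0 : E4) 1, f (r • (ω : E4)) ∂(volume : Measure E4).toSphere := by
  have hmp := (volume : Measure E4).measurePreserving_homeomorphUnitSphereProd
  have hemb := (homeomorphUnitSphereProd E4).measurableEmbedding
  set F : (Metric.sphere (0 : E4) 1) × Set.Ioi (0 : ℝ) → ℂ := fun p => f ((p.2 : ℝ) • (p.1 : E4)) with hF
  have hcomp : ∀ x : ({0}ᶜ : Set E4), F (homeomorphUnitSphereProd E4 x) = f x := fun x => by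
    have hx : ‖(x : E4)‖ ≠ 0 := norm_ne_zero_iff.2 x.2
    simp [hF, homeomorphUnitSphereProd, smul_smul, hx]
  have h1 : ∫ x, f x = ∫ p, F p ∂((volume : Measure E4).toSphere.prod
      (Measure.volumeIoiPow (Module.finrank ℝ E4 - 1))) := by
    rw [← hmp.integral_comp hemb F]
    simp_rw [hcomp]
    rw [integral_subtype_comap (measurableSet_singleton _).compl f, restrict_compl_singleton]
  have hFi : Integrable F ((volume : Measure E4).toSphere.prod
      (Measure.volumeIoiPow (Module.finrank ℝ E4 - 1))) := by
    rw [← hmp.integrable_comp_emb hemb]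
    have : F ∘ (homeomorphUnitSphereProd E4) = f ∘ (Subtype.val : ({0}ᶜ : Set E4) → E4) := by
      funext x; exact hcomp x
    rw [this]
    have h0 : IntegrableOn f ({0}ᶜ : Set E4) := hf.integrableOn
    rwa [integrableOn_iff_comap_subtypeVal (measurableSet_singleton _).compl] at h0
  rw [h1, integral_prod_symm _ hFi]
  simp only [Measure.volumeIoiPow, ENNReal.ofReal, hF]
  rw [integral_withDensity_eq_integral_smul,
    integral_subtype_comap measurableSet_Ioi (fun a : ℝ ↦ Real.toNNReal (a ^ (Module.finrank ℝ E4 - 1)) •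
      ∫ ω : Metric.sphere (0 : E4) 1, f (a • (ω : E4)) ∂(volume : Measure E4).toSphere),
    setIntegral_congr_fun measurableSet_Ioi fun x hx ↦ ?_]
  · have hx' : (0 : ℝ) < x := hx
    simp only [finrank_euclideanSpace, Fintype.card_fin, NNReal.smul_def]
    rw [Real.coe_toNNReal _ (by positivity)]
  · exact (measurable_subtype_coe.pow_const _).real_toNNReal

/-- radial cutoffs -/
lemma radial {γ : ℝ → ℝ} (hγ : Continuous γ) {α β : ℝ} (hα : 0 < α) (hαβ : α < β)
    (hs : Function.support γ ⊆ Set.Ioo α β) :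
    ∃ χ : E4 → ℂ, ContDiff ℝ 1 χ ∧ tsupport χ ⊆ Metric.closedBall 0 β ∧
      (∀ i x, pd i χ x = -((γ ‖x‖ * ‖x‖⁻¹ : ℝ) : ℂ) * (x i : ℂ)) ∧
      (∀ x, ‖x‖ < α → χ x = ((∫ t, γ t : ℝ) : ℂ)) := by
  have zero : ∀ t, t ∉ Set.Ioo α β → γ t = 0 := fun t ht => by
    by_contra h; exact ht (hs h)
  set θ : ℝ → ℝ := fun r => ∫ t in r..β, γ t with hθ
  have hd : ∀ r, HasDerivAt θ (-γ r) r := fun r =>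
    intervalIntegral.integral_hasDerivAt_left (hγ.intervalIntegrable _ _)
      (hγ.stronglyMeasurableAtFilter _ _) hγ.continuousAt
  have θc : ContDiff ℝ 1 θ := by
    rw [contDiff_one_iff_deriv]
    refine ⟨fun r => (hd r).differentiableAt, ?_⟩
    rw [show deriv θ = fun r => -γ r from funext fun r => (hd r).deriv]
    exact hγ.neg
  have θα : ∀ r, r ≤ α → θ r = ∫ t, γ t := fun r hr => by
    rw [hθ]; simp only
    rw [intervalIntegral.integral_of_le (by linarith), setIntegral_eq_integral_of_forall_compl_eq_zero]
    intro t ht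
    refine zero t fun h => ht ⟨by linarith [h.1], h.2.le⟩
  have θβ : ∀ r, β ≤ r → θ r = 0 := fun r hr => by
    rw [hθ]; simp only
    rw [intervalIntegral.integral_symm, intervalIntegral.integral_of_le hr, neg_eq_zero]
    refine setIntegral_eq_zero_of_forall_eq_zero fun t ht => zero t fun h => ?_
    linarith [h.2, ht.1]
  have loc : ∀ x : E4, ‖x‖ < α → (fun x : E4 => ((θ ‖x‖ : ℝ) : ℂ)) =ᶠ[𝓝 x] fun _ => ((∫ t, γ t : ℝ) : ℂ) := by
    intro x hx
    filter_upwards [(isOpen_lt continuous_norm continuous_const).mem_nhds hx] with y hy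
    rw [θα _ (le_of_lt hy)]
  refine ⟨fun x => ((θ ‖x‖ : ℝ) : ℂ), ?_, ?_, ?_, ?_⟩
  · rw [contDiff_iff_contDiffAt]
    intro x
    by_cases hx : x = 0
    · subst hx
      exact contDiffAt_const.congr_of_eventuallyEq (loc 0 (by simpa using hα))
    · have h1 : ContDiffAt ℝ 1 (fun y : E4 => ‖y‖) x := contDiffAt_norm ℝ hx
      exact Complex.ofRealCLM.contDiff.contDiffAt.comp x (θc.contDiffAt.comp x h1)
  · refine closure_minimal ?_ Metric.isClosed_closedBall
    intro x hx
    rw [mem_closedBall_zero_iff]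
    by_contra h
    exact hx (by simp [θβ ‖x‖ (not_le.1 h).le])
  · intro i x
    by_cases hx : ‖x‖ < α
    · rw [pd_congr (loc x hx), pd_const, zero _ (fun h => by linarith [h.1])]
      simp
    · have hx0 : x ≠ 0 := fun h => hx (by simpa [h] using hα)
      have hn : ‖x‖ ≠ 0 := norm_ne_zero_iff.2 hx0
      have h1 : HasFDerivAt (fun y : E4 => √(‖y‖ ^ 2)) _ x :=
        (hasStrictFDerivAt_norm_sq x).hasFDerivAt.sqrt (by positivity)
      simp_rw [Real.sqrt_sq (norm_nonneg _)] at h1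
      have h2 := (hd ‖x‖).comp_hasFDerivAt x h1
      have h3 : HasFDerivAt (fun x : E4 => ((θ ‖x‖ : ℝ) : ℂ)) _ x :=
        Complex.ofRealCLM.hasFDerivAt.comp x h2
      unfold pd
      rw [h3.fderiv]
      simp [EuclideanSpace.inner_single_right]
      field_simp
  · intro x hx
    simp only
    rw [θα _ hx.le]


lemma sum_le_norm (η x : E4) : |∑ i, η i * x i| ≤ ‖η‖ * ‖x‖ := by
  have := abs_real_inner_le_norm x η
  rw [PiLp.inner_apply] at this
  simpa [mul_comm] using this

lemma flat_poisson {g : E4 → ℂ} {V₀ : Set E4} (hV₀ : IsOpen V₀) {ρ : ℝ} (hρ : 0 < ρ)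
    (hball : Metric.closedBall (0 : E4) ρ ⊆ V₀) (hg₀ : AnalyticOnNhd ℝ g V₀)
    (hl₀ : ∀ x ∈ V₀, lap g x = 0) {η : E4} (hη : ‖η‖ < ρ) :
    2 * (Real.pi : ℂ) ^ 2 * g η = (ρ ^ 2 : ℝ) • ∫ ω : Metric.sphere (0 : E4) 1,
      tdeg g (ρ • (ω : E4)) * (((‖η - ρ • (ω : E4)‖ ^ 2)⁻¹ : ℝ) : ℂ)
        ∂(volume : Measure E4).toSphere := by
  set a : ℝ := Nq η / ρ ^ 2 with ha
  set V : Set E4 := V₀ ∩ {x | qD a (ρ ^ 2) η x ≠ 0} with hVdef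
  have hqc : Continuous (qD a (ρ ^ 2) η) :=
    continuous_iff_continuousAt.2 fun x => (qD_analytic _ _ _ x).continuousAt
  have hV : IsOpen V := hV₀.inter (isOpen_ne_fun hqc continuous_const)
  have hbV : Metric.closedBall (0 : E4) ρ ⊆ V := by
    intro x hx
    refine ⟨hball hx, ?_⟩
    rw [mem_closedBall_zero_iff] at hx
    show qD a (ρ ^ 2) η x ≠ 0
    rw [qD_eq, ha, Nq_eq, Nq_eq]
    have h1 := (abs_le.1 (sum_le_norm η x)).2
    have h2 : ‖η‖ * ‖x‖ < ρ ^ 2 := by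
      nlinarith [norm_nonneg η, norm_nonneg x]
    have h3 : ‖η‖ * ‖x‖ / ρ < ρ := by rw [div_lt_iff₀ hρ]; nlinarith
    have h4 : ‖η‖ ^ 2 / ρ ^ 2 * ‖x‖ ^ 2 = (‖η‖ * ‖x‖ / ρ) ^ 2 := by field_simp
    have h5 : ‖η‖ * ‖x‖ = (‖η‖ * ‖x‖ / ρ) * ρ := by field_simp
    have : 0 < ‖η‖ ^ 2 / ρ ^ 2 * ‖x‖ ^ 2 - 2 * (∑ i, η i * x i) + ρ ^ 2 := by
      rw [h4]
      nlinarith [pow_pos (sub_pos.2 h3) 2]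
    exact_mod_cast this.ne'
  obtain ⟨δ, hδ, hδV⟩ := (isCompact_closedBall (0 : E4) ρ).exists_cthickening_subset_open hV hbV
  rw [cthickening_closedBall hδ.le hρ.le] at hδV
  set β := δ + ρ with hβ
  set α := (‖η‖ + ρ) / 2 with hα
  have hα0 : 0 < α := by have := norm_nonneg η; positivity
  have hαρ : α < ρ := by rw [hα]; linarith
  have hηα : ‖η‖ < α := by rw [hα]; linarith
  have hρβ : ρ < β := by linarith
  have hg : AnalyticOnNhd ℝ g V := hg₀.mono Set.inter_subset_left
  have hl : ∀ x ∈ V, lap g x = 0 := fun x hx => hl₀ x hx.1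
  set K' : E4 → ℂ := fun x => (qD a (ρ ^ 2) η x)⁻¹ with hK'
  have hKa : AnalyticOnNhd ℝ K' V := fun x hx => qDinv_analytic _ _ _ _ hx.2
  have hl' : ∀ x ∈ V, lap K' x = 0 := fun x hx => by
    have := lap_qDinv a (ρ ^ 2) η x hx.2
    rw [hK', this, ha, div_mul_cancel₀ _ (by positivity)]
    simp
  have hηV : η ∈ V := hbV (by simpa using hη.le)
  set K : E4 → ℂ := fun x => (qD 1 (Nq η + 0) η x)⁻¹ with hK
  set h : E4 → ℂ := fun x => ∑ i, (x i : ℂ) * (g x * (-(2 * (x i : ℂ) - 2 * η i) * (K x) ^ 2 + pd i K' x)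
      - (K x + K' x) * pd i g x) with hh
  have Kc : ContinuousOn K {η}ᶜ := fun x hx => by
    refine (qDinv_analytic 1 (Nq η + 0) η x ?_).continuousAt.continuousWithinAt
    rw [qD_one]
    have : η - x ≠ 0 := sub_ne_zero.2 (Ne.symm hx)
    exact_mod_cast (by positivity)
  have hV2 : IsOpen (V ∩ {η}ᶜ) := hV.inter isOpen_compl_singleton
  have hc : ContinuousOn h (V ∩ {η}ᶜ) := by
    have k1 := Kc.mono (Set.inter_subset_right (s := V))
    have k2 := hKa.continuousOn.mono (Set.inter_subset_left (t := ({η}ᶜ : Set E4)))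
    have k3 := hg.continuousOn.mono (Set.inter_subset_left (t := ({η}ᶜ : Set E4)))
    refine continuousOn_finsetSum _ fun i _ => ?_
    have k4 := (pd_analytic hKa i).continuousOn.mono (Set.inter_subset_left (t := ({η}ᶜ : Set E4)))
    have k5 := (pd_analytic hg i).continuousOn.mono (Set.inter_subset_left (t := ({η}ᶜ : Set E4)))
    have k6 : ContinuousOn (fun x : E4 => (x i : ℂ)) (V ∩ {η}ᶜ) := by fun_prop
    have k7 : ContinuousOn (fun x : E4 => -(2 * (x i : ℂ) - 2 * η i)) (V ∩ {η}ᶜ) := by fun_prop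
    exact k6.mul ((k3.mul ((k7.mul (k1.pow 2)).add k4)).sub ((k1.add k2).mul k5))
  have hin : ∀ r ∈ Set.Ioo α β, ∀ ω : Metric.sphere (0 : E4) 1, r • (ω : E4) ∈ V ∩ {η}ᶜ := by
    intro r hr ω
    have hr0 : 0 < r := hα0.trans hr.1
    have hn : ‖r • (ω : E4)‖ = r := by
      rw [norm_smul, Real.norm_of_nonneg hr0.le, norm_eq_of_mem_sphere, mul_one]
    refine ⟨hδV ?_, fun he => ?_⟩
    · rw [mem_closedBall_zero_iff, hn]; exact hr.2.le
    · rw [Set.mem_singleton_iff] at he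
      rw [he] at hn; linarith [hr.1]
  set M : ℝ → ℂ := fun r => ∫ ω : Metric.sphere (0 : E4) 1, h (r • (ω : E4)) ∂(volume : Measure E4).toSphere with hM
  have Mc : ContinuousOn M (Set.Ioo α β) := by
    refine continuousOn_integral_of_compact_support (f := fun (r : ℝ) (ω : Metric.sphere (0 : E4) 1) => h (r • (ω : E4)))
      (k := Set.univ) isCompact_univ ?_ (fun _ _ _ hx => absurd (Set.mem_univ _) hx)
    refine hc.comp (f := fun p : ℝ × Metric.sphere (0 : E4) 1 => p.1 • (p.2 : E4)) (by fun_prop) ?_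
    rintro ⟨r, ω⟩ hp
    exact hin r hp.1 ω
  set Φ : ℝ → ℂ := fun r => (r ^ 2 : ℝ) • M r + 4 * (Real.pi : ℂ) ^ 2 * g η with hΦ
  have Φc : ContinuousOn Φ (Set.Ioo α β) := by
    have sq : ContinuousOn (fun r : ℝ => r ^ 2) (Set.Ioo α β) := by fun_prop
    exact (sq.smul Mc).add continuousOn_const
  have test : ∀ γ : ℝ → ℝ, ContDiff ℝ (⊤ : ℕ∞) γ → HasCompactSupport γ → tsupport γ ⊆ Set.Ioo α β →
      ∫ r, γ r • Φ r = 0 := by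
    intro γ hγ hγc hγs
    obtain ⟨χ, χ1, χ2, χ3, χ4⟩ := radial hγ.continuous hα0 (hαρ.trans hρβ)
      ((subset_tsupport γ).trans hγs)
    have gz : ∀ r, r ∉ Set.Ioo α β → γ r = 0 := fun r hr =>
      image_eq_zero_of_notMem_tsupport fun h => hr (hγs h)
    have χc : HasCompactSupport χ :=
      (isCompact_closedBall (0 : E4) β).of_isClosed_subset (isClosed_tsupport _) χ2
    have χη : ∀ i, η ∉ tsupport (pd i χ) := by
      intro i
      rw [notMem_tsupport_iff_eventuallyEq]
      filter_upwards [(isOpen_lt continuous_norm continuous_const).mem_nhds hηα] with y hy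
      rw [χ3, gz _ (fun h => by have : ‖y‖ < α := hy; linarith [h.1])]
      simp
    have W := weak_rep hV χ1 χc (χ2.trans hδV) hg hKa hl hl' hηV χη
    rw [χ4 η hηα] at W
    have e1 : ∀ x : E4, ∑ i, pd i χ x * (g x * (-(2 * (x i : ℂ) - 2 * η i) * ((qD 1 (Nq η + 0) η x)⁻¹) ^ 2 + pd i K' x)
        - ((qD 1 (Nq η + 0) η x)⁻¹ + K' x) * pd i g x) = (-((γ ‖x‖ * ‖x‖⁻¹ : ℝ) : ℂ)) * h x := fun x => by
      rw [hh]; simp only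
      rw [Finset.mul_sum]
      refine Finset.sum_congr rfl fun i _ => ?_
      rw [χ3]; ring
    simp_rw [e1] at W
    set κ : E4 → ℂ := fun x => (-((γ ‖x‖ * ‖x‖⁻¹ : ℝ) : ℂ)) with hκ
    have κc : Continuous κ := by
      rw [continuous_iff_continuousAt]
      intro x
      by_cases hx : ‖x‖ < α
      · have : κ =ᶠ[𝓝 x] fun _ => 0 := by
          filter_upwards [(isOpen_lt continuous_norm continuous_const).mem_nhds hx] with y hy
          rw [hκ]; simp only
          rw [gz _ (fun h => by have : ‖y‖ < α := hy; linarith [h.1])]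
          simp
        exact this.continuousAt
      · have : ‖x‖ ≠ 0 := by linarith
        have h1 : ContinuousAt (fun x : E4 => γ ‖x‖ * ‖x‖⁻¹) x :=
          (hγ.continuous.comp continuous_norm).continuousAt.mul (continuous_norm.continuousAt.inv₀ this)
        exact (Complex.continuous_ofReal.continuousAt.comp h1).neg
    have κs : tsupport κ ⊆ V ∩ {η}ᶜ := by
      have : tsupport κ ⊆ (fun x : E4 => ‖x‖) ⁻¹' (tsupport γ) := by
        refine closure_minimal ?_ ((isClosed_tsupport γ).preimage continuous_norm)
        intro x hx
        refine subset_tsupport γ (fun h0 => hx ?_)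
        rw [hκ]; simp [h0]
      intro x hx
      have hx2 := hγs (this hx)
      refine ⟨hδV ?_, fun he => ?_⟩
      · rw [mem_closedBall_zero_iff]; exact hx2.2.le
      · rw [Set.mem_singleton_iff] at he
        rw [he] at hx2; linarith [hx2.1]
    have κcs : HasCompactSupport κ := by
      refine HasCompactSupport.intro (isCompact_closedBall (0 : E4) β) fun x hx => ?_
      rw [mem_closedBall_zero_iff] at hx
      rw [hκ]; simp only
      rw [gz _ (fun h => hx h.2.le)]; simp
    rw [polar (int_mul_tsupport hV2 κc κcs κs hc)] at W
    have e2 : ∫ r in Set.Ioi (0 : ℝ), (r ^ 3 : ℝ) •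
        ∫ ω : Metric.sphere (0 : E4) 1, κ (r • (ω : E4)) * h (r • (ω : E4)) ∂(volume : Measure E4).toSphere
        = - ∫ r, γ r • ((r ^ 2 : ℝ) • M r) := by
      rw [← integral_neg]
      have key : ∫ r in Set.Ioi (0 : ℝ), -(γ r • ((r ^ 2 : ℝ) • M r)) =
          ∫ r, -(γ r • ((r ^ 2 : ℝ) • M r)) := by
        refine setIntegral_eq_integral_of_forall_compl_eq_zero fun r hr => ?_
        rw [gz r (fun h => hr (hα0.trans h.1))]
        simp
      rw [← key]
      · refine setIntegral_congr_fun measurableSet_Ioi fun r hr => ?_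
        have hr0 : 0 < r := hr
        have hn : ∀ ω : Metric.sphere (0 : E4) 1, ‖r • (ω : E4)‖ = r := fun ω => by
          rw [norm_smul, Real.norm_of_nonneg hr0.le, norm_eq_of_mem_sphere, mul_one]
        simp only [hκ, hn]
        rw [integral_const_mul, hM]
        simp only [Complex.real_smul]
        have : (r : ℂ) * (r : ℂ)⁻¹ = 1 := mul_inv_cancel₀ (by exact_mod_cast hr0.ne')
        push_cast
        linear_combination (-(γ r : ℂ) * (r : ℂ) ^ 2 * ∫ ω : Metric.sphere (0 : E4) 1, h (r • (ω : E4)) ∂(volume : Measure E4).toSphere) * this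
    rw [e2] at W
    have i1 : Integrable (fun r => γ r • ((r ^ 2 : ℝ) • M r)) := by
      have cc : Continuous (fun r => γ r • ((r ^ 2 : ℝ) • M r)) := by
        rw [continuous_iff_continuousAt]
        intro r
        by_cases hr : r ∈ tsupport γ
        · have sq : ContinuousAt (fun r : ℝ => r ^ 2) r := by fun_prop
          exact hγ.continuous.continuousAt.smul (sq.smul
            (Mc.continuousAt (isOpen_Ioo.mem_nhds (hγs hr))))
        · have : (fun r => γ r • ((r ^ 2 : ℝ) • M r)) =ᶠ[𝓝 r] fun _ => 0 := by
            filter_upwards [(isClosed_tsupport γ).isOpen_compl.mem_nhds hr] with y hy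
            rw [image_eq_zero_of_notMem_tsupport hy, zero_smul]
          exact this.continuousAt
      exact cc.integrable_of_hasCompactSupport hγc.smul_right
    have i2 : Integrable (fun r => γ r • (4 * (Real.pi : ℂ) ^ 2 * g η)) :=
      (hγ.continuous.integrable_of_hasCompactSupport hγc).smul_const _
    simp_rw [hΦ, smul_add]
    rw [integral_add i1 i2, integral_smul_const, Complex.real_smul]
    linear_combination -W
  have ae := isOpen_Ioo.ae_eq_zero_of_integral_contDiff_smul_eq_zero
    (Φc.locallyIntegrableOn measurableSet_Ioo) test
  have ae2 : Φ =ᵐ[volume.restrict (Set.Ioo α β)] fun _ => 0 := by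
    rw [Filter.EventuallyEq, ae_restrict_iff' measurableSet_Ioo]; exact ae
  have fin := Measure.eqOn_open_of_ae_eq ae2 isOpen_Ioo Φc continuousOn_const ⟨hαρ, hρβ⟩
  simp only [hΦ] at fin
  have e3 : ∀ ω : Metric.sphere (0 : E4) 1, h (ρ • (ω : E4)) = (-2 : ℂ) *
      (tdeg g (ρ • (ω : E4)) * (((‖η - ρ • (ω : E4)‖ ^ 2)⁻¹ : ℝ) : ℂ)) := by
    intro ω
    have hn : ‖ρ • (ω : E4)‖ = ρ := by
      rw [norm_smul, Real.norm_of_nonneg hρ.le, norm_eq_of_mem_sphere, mul_one]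
    obtain ⟨hxV, hxη⟩ := hin ρ ⟨hαρ, hρβ⟩ ω
    set x : E4 := ρ • (ω : E4) with hx
    have hNx : Nq x = ρ ^ 2 := by rw [Nq_eq, hn]
    have hDD : qD a (ρ ^ 2) η x = qD 1 (Nq η + 0) η x := by
      rw [qD_eq, qD_eq, hNx, ha]
      congr 1
      field_simp
      ring
    have hD := qD_one η x 0
    rw [add_zero (‖η - x‖ ^ 2)] at hD
    have hD2 := qD_eq 1 (Nq η + 0) η x
    have hKK : K' x = K x := by simp only [hK', hK, hDD]
    have hKv : K x = (((‖η - x‖ ^ 2)⁻¹ : ℝ) : ℂ) := by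
      simp only [hK]; rw [hD]; push_cast; rfl
    have hne : qD 1 (Nq η + 0) η x ≠ 0 := hDD ▸ hxV.2
    have hm : qD 1 (Nq η + 0) η x * K x = 1 := mul_inv_cancel₀ hne
    have hpd : ∀ i, pd i K' x = -(2 * (a : ℂ) * x i - 2 * η i) * (K x) ^ 2 := fun i => by
      rw [hK', pd_qDinv a (ρ ^ 2) η x hxV.2, hDD]
    rw [← hKv]
    simp only [hh]
    simp_rw [hpd, hKK]
    rw [hD2] at hm
    have hNx' := congrArg (fun r : ℝ => (r : ℂ)) hNx
    have haρ : (a : ℂ) * (ρ : ℂ) ^ 2 = Nq η := by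
      have : a * ρ ^ 2 = Nq η := by rw [ha]; field_simp
      exact_mod_cast this
    simp only [hNx] at hm
    unfold Nq at hNx'
    unfold tdeg degOp
    simp only [Fin.sum_univ_four] at hNx' hm ⊢
    push_cast at hNx' hm
    linear_combination (-2 * (1 + a) * g x * (K x) ^ 2) * hNx' - 2 * g x * (K x) ^ 2 * haρ - 2 * g x * K x * hm
  simp_rw [hM, e3] at fin
  rw [integral_const_mul] at fin
  simp only [Complex.real_smul] at fin ⊢
  linear_combination (1/2 : ℂ) * fin


lemma Nq_zero : Nq (0 : E4) = 0 := by simp [Nq]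

/-- the conformal factor -/
def sF (κ : ℝ) (ξ : E4) : ℝ := (1 - κ * Nq ξ)⁻¹

lemma sF_C (κ : ℝ) (ξ : E4) : ((sF κ ξ : ℝ) : ℂ) = (qD (-κ) 1 0 ξ)⁻¹ := by
  rw [qD_eq, sF]
  simp
  ring

lemma sF_ne {κ : ℝ} {ξ : E4} (h : 1 - κ * Nq ξ ≠ 0) : qD (-κ) 1 0 ξ ≠ 0 := by
  intro h0
  have := sF_C κ ξ
  rw [h0, inv_zero] at this
  exact h (inv_eq_zero.1 (by exact_mod_cast this))

lemma sC_analytic {κ : ℝ} {ξ : E4} (h : 1 - κ * Nq ξ ≠ 0) :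
    AnalyticAt ℝ (fun x => ((sF κ x : ℝ) : ℂ)) ξ := by
  simp_rw [sF_C]
  exact qDinv_analytic _ _ _ _ (sF_ne h)

lemma pd_sC {κ : ℝ} {ξ : E4} (h : 1 - κ * Nq ξ ≠ 0) (i : Fin 4) :
    pd i (fun x => ((sF κ x : ℝ) : ℂ)) ξ = 2 * κ * ξ i * (sF κ ξ : ℂ) ^ 2 := by
  simp_rw [sF_C]
  rw [pd_qDinv _ _ _ _ (sF_ne h)]
  simp

lemma sF_analytic {κ : ℝ} {ξ : E4} (h : 1 - κ * Nq ξ ≠ 0) : AnalyticAt ℝ (sF κ) ξ :=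
  (Complex.reCLM.analyticAt _).comp (sC_analytic h)

lemma sF_fderiv {κ : ℝ} {ξ : E4} (h : 1 - κ * Nq ξ ≠ 0) (i : Fin 4) :
    fderiv ℝ (sF κ) ξ (EuclideanSpace.single i 1) = 2 * κ * ξ i * sF κ ξ ^ 2 := by
  have h1 := Complex.ofRealCLM.hasFDerivAt.comp ξ (sF_analytic h).differentiableAt.hasFDerivAt
  have h2 := pd_sC h i
  unfold pd at h2
  rw [show (fun x => ((sF κ x : ℝ) : ℂ)) = Complex.ofRealCLM ∘ sF κ from rfl, h1.fderiv] at h2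
  simp only [ContinuousLinearMap.comp_apply, Complex.ofRealCLM_apply] at h2
  exact_mod_cast h2

lemma X_analytic {κ : ℝ} {ξ : E4} (h : 1 - κ * Nq ξ ≠ 0) :
    AnalyticAt ℝ (fun x => sF κ x • x) ξ := (sF_analytic h).smul analyticAt_id

lemma chain {κ : ℝ} {ξ : E4} (h : 1 - κ * Nq ξ ≠ 0) {F : E4 → ℂ}
    (hF : DifferentiableAt ℝ F (sF κ ξ • ξ)) (i : Fin 4) :
    pd i (fun x => F (sF κ x • x)) ξ = sF κ ξ * pd i F (sF κ ξ • ξ)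
      + 2 * κ * sF κ ξ * ξ i * degOp F (sF κ ξ • ξ) := by
  have h1 := (sF_analytic h).differentiableAt.hasFDerivAt.smul (hasFDerivAt_id ξ)
  have h2 := HasFDerivAt.comp (g := F) (f := sF κ • id) ξ hF.hasFDerivAt h1
  rw [degOp_eq]
  unfold pd
  rw [show (fun x => F (sF κ x • x)) = F ∘ (sF κ • id) from rfl, h2.fderiv]
  simp only [ContinuousLinearMap.comp_apply, _root_.add_apply, map_add, _root_.smul_apply,
    ContinuousLinearMap.smulRight_apply, map_smul, sF_fderiv h, ContinuousLinearMap.id_apply, id]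
  simp only [Complex.real_smul]
  push_cast
  ring

lemma comp_analytic {κ : ℝ} {F : E4 → ℂ} {U : Set E4} (hF : AnalyticOnNhd ℝ F U)
    {ξ : E4} (h : 1 - κ * Nq ξ ≠ 0) (hU : sF κ ξ • ξ ∈ U) :
    AnalyticAt ℝ (fun x => F (sF κ x • x)) ξ :=
  AnalyticAt.comp (g := F) (f := fun x => sF κ x • x) (hF _ hU) (X_analytic h)

lemma gF_analytic {κ : ℝ} {φ : E4 → ℂ} {U : Set E4} (hφ : AnalyticOnNhd ℝ φ U)
    {ξ : E4} (h : 1 - κ * Nq ξ ≠ 0) (hU : sF κ ξ • ξ ∈ U) :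
    AnalyticAt ℝ (fun x => (sF κ x : ℂ) * φ (sF κ x • x)) ξ :=
  (sC_analytic h).mul (comp_analytic hφ h hU)

lemma pd_gF {κ : ℝ} {φ : E4 → ℂ} {U : Set E4} (hφ : AnalyticOnNhd ℝ φ U)
    {ξ : E4} (h : 1 - κ * Nq ξ ≠ 0) (hU : sF κ ξ • ξ ∈ U) (i : Fin 4) :
    pd i (fun x => (sF κ x : ℂ) * φ (sF κ x • x)) ξ =
      (sF κ ξ : ℂ) ^ 2 * (2 * κ * ξ i * tdeg φ (sF κ ξ • ξ) + pd i φ (sF κ ξ • ξ)) := by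
  have hd := (hφ _ hU).differentiableAt
  rw [pd_mul (sC_analytic h).differentiableAt (comp_analytic hφ h hU).differentiableAt,
    pd_sC h]
  have := chain h hd i
  rw [this, tdeg]
  ring

lemma sF_rel {κ : ℝ} {ξ : E4} (h : 1 - κ * Nq ξ ≠ 0) : sF κ ξ * (1 - κ * Nq ξ) = 1 :=
  inv_mul_cancel₀ h

lemma tdeg_gF {κ : ℝ} {φ : E4 → ℂ} {U : Set E4} (hφ : AnalyticOnNhd ℝ φ U)
    {ξ : E4} (h : 1 - κ * Nq ξ ≠ 0) (hU : sF κ ξ • ξ ∈ U) :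
    tdeg (fun x => (sF κ x : ℂ) * φ (sF κ x • x)) ξ =
      (sF κ ξ : ℂ) * (2 * sF κ ξ - 1) * tdeg φ (sF κ ξ • ξ) := by
  have r := congrArg (fun r : ℝ => (r : ℂ)) (sF_rel h)
  rw [tdeg, degOp]
  simp_rw [pd_gF hφ h hU]
  have hdeg : degOp φ (sF κ ξ • ξ) = ∑ i, (sF κ ξ : ℂ) * ξ i * pd i φ (sF κ ξ • ξ) := by
    rw [degOp]; simp
  have ht : tdeg φ (sF κ ξ • ξ) = φ (sF κ ξ • ξ) + degOp φ (sF κ ξ • ξ) := rfl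
  generalize tdeg φ (sF κ ξ • ξ) = T at *
  unfold Nq at r
  simp only [Fin.sum_univ_four] at *
  push_cast at r
  linear_combination (- (sF κ ξ : ℂ)) * ht - sF κ ξ * hdeg - 2 * sF κ ξ * T * r

lemma degdeg {φ : E4 → ℂ} {U : Set E4} (hφ : AnalyticOnNhd ℝ φ U) {x : E4} (hx : x ∈ U) :
    degOp (degOp φ) x = degOp φ x + ∑ i, (x i : ℂ) * degOp (pd i φ) x := by
  have h1 : ∀ i, pd i (degOp φ) x = pd i φ x + ∑ j, (x j : ℂ) * pd i (pd j φ) x := by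
    intro i
    unfold degOp
    have hd : ∀ j, DifferentiableAt ℝ (pd j φ) x := fun j => (pd_analytic hφ j x hx).differentiableAt
    have hc : ∀ j, DifferentiableAt ℝ (fun X : E4 => (X j : ℂ)) x := fun j => (coord_analytic j x).differentiableAt
    rw [pd_sum (fun j => (hc j).fun_mul (hd j))]
    simp_rw [pd_mul (hc _) (hd _), pd_coord]
    rw [Finset.sum_add_distrib]
    simp [add_comm]
  rw [degOp]
  simp_rw [h1]
  simp only [degOp, Fin.sum_univ_four]
  ring

lemma lap_gF {κ μ : ℝ} (hκ : 4 * κ = μ ^ 2) {φ : E4 → ℂ} {U : Set E4} (hUo : IsOpen U)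
    (hφ : AnalyticOnNhd ℝ φ U)
    {ξ : E4} (h : 1 - κ * Nq ξ ≠ 0) (hU : sF κ ξ • ξ ∈ U) :
    lap (fun x => (sF κ x : ℂ) * φ (sF κ x • x)) ξ =
      (sF κ ξ : ℂ) ^ 3 * boxTilde μ φ (sF κ ξ • ξ) := by
  have hNc : Continuous Nq := by unfold Nq; fun_prop
  have ev : ∀ i, pd i (fun x => (sF κ x : ℂ) * φ (sF κ x • x)) =ᶠ[nhds ξ]
      fun x => ((sF κ x : ℂ) * sF κ x) * ((2 * κ) * ((x i : ℂ) * tdeg φ (sF κ x • x)) + pd i φ (sF κ x • x)) := by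
    intro i
    have e1 : ∀ᶠ x in nhds ξ, 1 - κ * Nq x ≠ 0 :=
      (isOpen_ne_fun (by fun_prop) continuous_const).mem_nhds h
    have e2 := (X_analytic h).continuousAt.preimage_mem_nhds (hUo.mem_nhds hU)
    filter_upwards [e1, e2] with x h1 h2
    rw [pd_gF hφ h1 h2]; ring
  have hT := tdeg_analytic hφ
  have hD := degOp_analytic hφ
  have da := fun {F : E4 → ℂ} (hF : AnalyticOnNhd ℝ F U) =>
    (comp_analytic hF h hU).differentiableAt
  have ds := (sC_analytic h).differentiableAt
  have hc : ∀ j, DifferentiableAt ℝ (fun X : E4 => (X j : ℂ)) ξ := fun j => (coord_analytic j ξ).differentiableAt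
  have hk : DifferentiableAt ℝ (fun _ : E4 => (2 * κ : ℂ)) ξ := differentiableAt_const _
  have hpt : ∀ i, pd i (tdeg φ) (sF κ ξ • ξ) = pd i φ (sF κ ξ • ξ) + pd i (degOp φ) (sF κ ξ • ξ) := fun i =>
    pd_add (hφ _ hU).differentiableAt (hD _ hU).differentiableAt i
  have second : ∀ i, pd i (pd i (fun x => (sF κ x : ℂ) * φ (sF κ x • x))) ξ =
      ((sF κ ξ : ℂ) * sF κ ξ) * (2 * κ * (ξ i * (sF κ ξ * pd i (tdeg φ) (sF κ ξ • ξ)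
        + 2 * κ * sF κ ξ * ξ i * degOp (tdeg φ) (sF κ ξ • ξ)) + tdeg φ (sF κ ξ • ξ))
        + (sF κ ξ * pd i (pd i φ) (sF κ ξ • ξ)
        + 2 * κ * sF κ ξ * ξ i * degOp (pd i φ) (sF κ ξ • ξ)))
      + (2 * (2 * κ * ξ i * (sF κ ξ : ℂ) ^ 2) * sF κ ξ) * ((2 * κ) * ((ξ i : ℂ) * tdeg φ (sF κ ξ • ξ)) + pd i φ (sF κ ξ • ξ)) := by
    intro i
    have d1 := da hT
    have d2 := da (pd_analytic hφ i)
    rw [pd_congr (ev i), pd_mul (ds.fun_mul ds) ((hk.fun_mul ((hc i).fun_mul d1)).fun_add d2),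
      pd_mul ds ds, pd_add (hk.fun_mul ((hc i).fun_mul d1)) d2, pd_mul hk ((hc i).fun_mul d1),
      pd_mul (hc i) d1, pd_const, pd_coord, pd_sC h, chain h (hT _ hU).differentiableAt,
      chain h (pd_analytic hφ i _ hU).differentiableAt]
    simp only [if_true]
    ring
  have r := congrArg (fun r : ℝ => (r : ℂ)) (sF_rel h)
  have hdd := degdeg hφ hU
  have hdeg : degOp φ (sF κ ξ • ξ) = ∑ i, (sF κ ξ : ℂ) * ξ i * pd i φ (sF κ ξ • ξ) := by
    rw [degOp]; simp
  have hdegT : degOp (tdeg φ) (sF κ ξ • ξ) = ∑ i, (sF κ ξ : ℂ) * ξ i * pd i (tdeg φ) (sF κ ξ • ξ) := by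
    rw [degOp]; simp
  have hdegT2 : degOp (tdeg φ) (sF κ ξ • ξ) = degOp φ (sF κ ξ • ξ) + degOp (degOp φ) (sF κ ξ • ξ) := by
    rw [degOp]; simp_rw [hpt, mul_add]; rw [Finset.sum_add_distrib]; rfl
  have ht : tdeg φ (sF κ ξ • ξ) = φ (sF κ ξ • ξ) + degOp φ (sF κ ξ • ξ) := rfl
  have hκ' : 4 * (κ : ℂ) = (μ : ℂ) ^ 2 := by exact_mod_cast hκ
  rw [lap, boxTilde, lap]
  simp_rw [second]
  simp only [PiLp.smul_apply, smul_eq_mul, Complex.ofReal_mul] at hdd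
  unfold Nq at r
  simp only [Fin.sum_univ_four] at *
  push_cast at r ⊢
  generalize tdeg φ (sF κ ξ • ξ) = T at *
  generalize degOp (degOp φ) (sF κ ξ • ξ) = DD at *
  generalize degOp (tdeg φ) (sF κ ξ • ξ) = DT at *
  generalize degOp φ (sF κ ξ • ξ) = D at *
  generalize (sF κ ξ : ℂ) = s at *
  rw [← hκ']
  linear_combination (-2 * (κ : ℂ) * s ^ 2) * hdegT - 2 * (κ : ℂ) * s ^ 2 * hdd - 4 * (κ : ℂ) * s ^ 2 * hdeg
    - (4 * (κ : ℂ) * s ^ 2 * DT + 8 * (κ : ℂ) * s ^ 2 * T) * r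
    + s ^ 2 * (4 * (κ : ℂ) * s - 2 * κ) * hdegT2 + 8 * (κ : ℂ) * s ^ 3 * ht


lemma one_sub {μ c n : ℝ} (hc : 0 ≤ c) (h : c ^ 2 = 1 + μ ^ 2 * n) :
    1 - μ ^ 2 / 4 * ((2 / (1 + c)) ^ 2 * n) = 2 / (1 + c) := by
  have : 1 + c ≠ 0 := by positivity
  field_simp
  linear_combination 4 * h

lemma Nq_smul (t : ℝ) (x : E4) : Nq (t • x) = t ^ 2 * Nq x := by
  simp [Nq, mul_pow, Finset.mul_sum]

lemma sF_val {μ c : ℝ} {x : E4} (hc : 0 ≤ c) (h : c ^ 2 = 1 + μ ^ 2 * Nq x) :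
    sF (μ ^ 2 / 4) ((2 / (1 + c)) • x) = (1 + c) / 2 := by
  rw [sF, Nq_smul, one_sub hc h, inv_div]

lemma hat_sqrt {μ c : ℝ} {x : E4} (hμ : 0 < μ) (hc : 0 ≤ c) (h : c ^ 2 = 1 + μ ^ 2 * Nq x) :
    Real.sqrt ((μ ^ 2)⁻¹ + Nq x) = c / μ := by
  rw [show (μ ^ 2)⁻¹ + Nq x = (c / μ) ^ 2 by field_simp; linarith]
  exact Real.sqrt_sq (by positivity)

lemma ker_eq {μ c d : ℝ} {X Y : E4} (hμ : 0 < μ) (hc : 0 ≤ c) (hd : 0 ≤ d)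
    (h : c ^ 2 = 1 + μ ^ 2 * Nq X) (h' : d ^ 2 = 1 + μ ^ 2 * Nq Y) :
    (‖(2 / (1 + d)) • Y - (2 / (1 + c)) • X‖ ^ 2)⁻¹ = (c + 1) * (d + 1) / 4 * Kmu μ X Y := by
  have h1 : 1 + c ≠ 0 := by positivity
  have h2 : 1 + d ≠ 0 := by positivity
  have key : -form14 (hat μ X - hat μ Y) (hat μ X - hat μ Y) =
      (c + 1) * (d + 1) / 4 * ‖(2 / (1 + d)) • Y - (2 / (1 + c)) • X‖ ^ 2 := by
    rw [← Nq_eq]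
    unfold form14 hat
    rw [hat_sqrt hμ hc h, hat_sqrt hμ hd h']
    have e1 : ∀ (a : ℝ) (f : Fin 4 → ℝ), (Fin.cons a f : Fin 5 → ℝ) 0 = a := fun _ _ => rfl
    have e2 : ∀ (a : ℝ) (f : Fin 4 → ℝ), (Fin.cons a f : Fin 5 → ℝ) 1 = f 0 := fun _ _ => rfl
    have e3 : ∀ (a : ℝ) (f : Fin 4 → ℝ), (Fin.cons a f : Fin 5 → ℝ) 2 = f 1 := fun _ _ => rfl
    have e4 : ∀ (a : ℝ) (f : Fin 4 → ℝ), (Fin.cons a f : Fin 5 → ℝ) 3 = f 2 := fun _ _ => rfl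
    have e5 : ∀ (a : ℝ) (f : Fin 4 → ℝ), (Fin.cons a f : Fin 5 → ℝ) 4 = f 3 := fun _ _ => rfl
    simp only [Pi.sub_apply, e1, e2, e3, e4, e5]
    unfold Nq at *
    simp only [Fin.sum_univ_four, PiLp.sub_apply, PiLp.smul_apply, smul_eq_mul] at *
    have a1 : (X 0 ^ 2 + X 1 ^ 2 + X 2 ^ 2 + X 3 ^ 2) / (1 + c) = (c - 1) / μ ^ 2 := by
      field_simp; linarith
    have a2 : (Y 0 ^ 2 + Y 1 ^ 2 + Y 2 ^ 2 + Y 3 ^ 2) / (1 + d) = (d - 1) / μ ^ 2 := by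
      field_simp; linarith
    have a3 : (c + 1) * (d + 1) / 4 * ((2 / (1 + d) * Y 0 - 2 / (1 + c) * X 0) ^ 2
        + (2 / (1 + d) * Y 1 - 2 / (1 + c) * X 1) ^ 2 + (2 / (1 + d) * Y 2 - 2 / (1 + c) * X 2) ^ 2
        + (2 / (1 + d) * Y 3 - 2 / (1 + c) * X 3) ^ 2) =
        (1 + c) * ((Y 0 ^ 2 + Y 1 ^ 2 + Y 2 ^ 2 + Y 3 ^ 2) / (1 + d))
        + (1 + d) * ((X 0 ^ 2 + X 1 ^ 2 + X 2 ^ 2 + X 3 ^ 2) / (1 + c))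
        - 2 * (X 0 * Y 0 + X 1 * Y 1 + X 2 * Y 2 + X 3 * Y 3) := by
      field_simp
      ring
    rw [a3, a1, a2]
    field_simp
    linear_combination -h - h'
  rw [Kmu, ← inv_neg, key]
  have : (c + 1) * (d + 1) / 4 ≠ 0 := by positivity
  rw [mul_inv]
  field_simp


/-- Poisson formula: if `φ` is real analytic and satisfies `□̃_μφ = 0` on an open set `U`
containing the closed ball `{N(X) ≤ R²}`, then for `N(Y) < R²`,
`φ(Y) = (√(1+μ²R²)/(2π²)) ∫_{S³_R} (d̃eg φ)(X) K_μ(X,Y) dS(X)/R`. -/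
theorem stmt11 (μ R : ℝ) (hμ : 0 < μ) (hR : 0 < R)
    (U : Set E4) (hU : IsOpen U) (hball : {X : E4 | Nq X ≤ R ^ 2} ⊆ U)
    (φ : E4 → ℂ) (hφ : AnalyticOnNhd ℝ φ U)
    (hsol : ∀ X ∈ U, boxTilde μ φ X = 0) :
    ∀ Y : E4, Nq Y < R ^ 2 →
      φ Y = ((Real.sqrt (1 + μ ^ 2 * R ^ 2) / (2 * Real.pi ^ 2) / R : ℝ) : ℂ) *
        sphereInt R (fun X => tdeg φ X * ((Kmu μ X Y : ℝ) : ℂ)) := by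

  intro Y hY
  set c := Real.sqrt (1 + μ ^ 2 * R ^ 2) with hc
  set d := Real.sqrt (1 + μ ^ 2 * Nq Y) with hd
  have hNY : 0 ≤ Nq Y := by rw [Nq_eq]; positivity
  have c0 : 0 ≤ c := Real.sqrt_nonneg _
  have d0 : 0 ≤ d := Real.sqrt_nonneg _
  have c2 : c ^ 2 = 1 + μ ^ 2 * R ^ 2 := Real.sq_sqrt (by positivity)
  have d2 : d ^ 2 = 1 + μ ^ 2 * Nq Y := Real.sq_sqrt (by positivity)
  have c1 : 1 + c ≠ 0 := by positivity
  have d1 : 1 + d ≠ 0 := by positivity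
  set κ := μ ^ 2 / 4 with hκ
  set ρ := 2 / (1 + c) * R with hρ
  have hρ0 : 0 < ρ := by positivity
  have hκρ : 1 - κ * ρ ^ 2 = 2 / (1 + c) := by
    rw [hρ, mul_pow]; exact one_sub c0 c2
  have hNc : Continuous Nq := by unfold Nq; fun_prop
  set A : Set E4 := {ξ | κ * Nq ξ < 1} with hA
  have hAo : IsOpen A := isOpen_lt (by fun_prop) continuous_const
  have hAne : ∀ ξ ∈ A, 1 - κ * Nq ξ ≠ 0 := fun ξ h => by
    have : κ * Nq ξ < 1 := h
    linarith
  have hXc : ContinuousOn (fun x => sF κ x • x) A := fun ξ h =>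
    (X_analytic (hAne ξ h)).continuousAt.continuousWithinAt
  set V := A ∩ (fun x => sF κ x • x) ⁻¹' U with hV
  have hVo : IsOpen V := hXc.isOpen_inter_preimage hAo hU
  have hbV : Metric.closedBall (0 : E4) ρ ⊆ V := by
    intro ξ hξ
    rw [mem_closedBall_zero_iff] at hξ
    have hN : Nq ξ ≤ ρ ^ 2 := by rw [Nq_eq]; gcongr
    have hκ0 : 0 < κ := by positivity
    have h1 : 2 / (1 + c) ≤ 1 - κ * Nq ξ := by rw [← hκρ]; gcongr
    have h2 : 0 < 2 / (1 + c) := by positivity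
    refine ⟨?_, hball ?_⟩
    · show κ * Nq ξ < 1
      linarith
    · show Nq (sF κ ξ • ξ) ≤ R ^ 2
      have h3 : sF κ ξ ≤ (1 + c) / 2 := by
        rw [sF, ← inv_div]; gcongr
      have h4 : 0 ≤ sF κ ξ := inv_nonneg.2 (by linarith)
      rw [Nq_smul]
      calc sF κ ξ ^ 2 * Nq ξ ≤ ((1 + c) / 2) ^ 2 * ρ ^ 2 := by
            gcongr
            rw [Nq_eq]; positivity
        _ = R ^ 2 := by rw [hρ]; field_simp
  set η := (2 / (1 + d)) • Y with hη
  have hηρ : ‖η‖ < ρ := by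
    have hr : ‖Y‖ < R := by
      rw [Nq_eq] at hY
      exact lt_of_pow_lt_pow_left₀ 2 hR.le hY
    rw [hη, norm_smul, Real.norm_of_nonneg (by positivity), hρ, div_mul_eq_mul_div, div_mul_eq_mul_div,
      div_lt_div_iff₀ (by positivity) (by positivity)]
    have : ‖Y‖ * c ≤ R * d := by
      refine le_of_sq_le_sq ?_ (by positivity)
      rw [mul_pow, mul_pow, c2, d2, ← Nq_eq]
      nlinarith
    nlinarith
  have F := flat_poisson (g := fun x => (sF κ x : ℂ) * φ (sF κ x • x)) hVo hρ0 hbV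
    (fun ξ h => gF_analytic hφ (hAne ξ h.1) h.2)
    (fun ξ h => by
      rw [lap_gF (μ := μ) (by rw [hκ]; ring) hU hφ (hAne ξ h.1) h.2, hsol _ h.2, mul_zero]) hηρ
  have hsη : sF κ η = (1 + d) / 2 := sF_val d0 d2
  have hsη2 : sF κ η • η = Y := by
    rw [hsη, hη, smul_smul]
    rw [show (1 + d) / 2 * (2 / (1 + d)) = 1 by field_simp, one_smul]
  have int : ∀ ω : Metric.sphere (0 : E4) 1,
      tdeg (fun x => (sF κ x : ℂ) * φ (sF κ x • x)) (ρ • (ω : E4)) *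
        (((‖η - ρ • (ω : E4)‖ ^ 2)⁻¹ : ℝ) : ℂ) =
      (((1 + c) / 2 * c * ((c + 1) * (d + 1) / 4) : ℝ) : ℂ) *
        (tdeg φ (R • (ω : E4)) * ((Kmu μ (R • (ω : E4)) Y : ℝ) : ℂ)) := by
    intro ω
    have hn : ‖ρ • (ω : E4)‖ = ρ := by
      rw [norm_smul, Real.norm_of_nonneg hρ0.le, norm_eq_of_mem_sphere, mul_one]
    have hN : Nq (R • (ω : E4)) = R ^ 2 := by
      rw [Nq_eq, norm_smul, Real.norm_of_nonneg hR.le, norm_eq_of_mem_sphere, mul_one]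
    have hmem : ρ • (ω : E4) ∈ V := hbV (by rw [mem_closedBall_zero_iff, hn])
    have hc2 : c ^ 2 = 1 + μ ^ 2 * Nq (R • (ω : E4)) := by rw [hN, c2]
    have hs : sF κ (ρ • (ω : E4)) = (1 + c) / 2 := by
      rw [hρ, ← smul_smul]; exact sF_val c0 hc2
    have hs2 : sF κ (ρ • (ω : E4)) • (ρ • (ω : E4)) = R • (ω : E4) := by
      rw [hs, smul_smul]
      congr 1
      rw [hρ]; field_simp
    rw [tdeg_gF hφ (hAne _ hmem.1) hmem.2, hs2, hs]
    have hk := ker_eq hμ c0 d0 hc2 d2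
    rw [smul_smul] at hk
    rw [hk]
    push_cast
    ring
  simp_rw [int] at F
  rw [integral_const_mul] at F
  rw [hsη2, hsη] at F
  unfold sphereInt
  simp only [Complex.real_smul] at F ⊢
  generalize (∫ ω : Metric.sphere (0 : E4) 1,
    tdeg φ (R • (ω : E4)) * ((Kmu μ (R • (ω : E4)) Y : ℝ) : ℂ) ∂(volume : Measure E4).toSphere) = I at *
  rw [hρ] at F
  have hpi : (Real.pi : ℂ) ≠ 0 := by exact_mod_cast Real.pi_ne_zero
  have hRC : (R : ℂ) ≠ 0 := by exact_mod_cast hR.ne'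
  have c1C : 1 + (c : ℂ) ≠ 0 := by exact_mod_cast c1
  have d1C : 1 + (d : ℂ) ≠ 0 := by exact_mod_cast d1
  push_cast at F ⊢
  field_simp at F ⊢
  refine mul_left_cancel₀ (mul_ne_zero (mul_ne_zero two_ne_zero c1C) d1C) ?_
  linear_combination F
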